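/- Let d ≥ 1 and let ψ, g : ℝ^d → ℝ be continuous, integrable, even functions whose Fourier transforms 𝓕ψ and 𝓕g are integrable, real-valued, and strictly positive everywhere, and set ψ̃ = g ⋆ ψ. For pairwise distinct points q_1, …, q_N ∈ ℝ^d define B_{ij} = ψ(q_i − q_j) and B̃_{ij} = ψ̃(q_i − q_j). Then B and B̃ are symmetric positive definite, B is invertible, and the matrix S = B̃ B^{−1} has all eigenvalues real and strictly positive (S is similar to a symmetric positive definite matrix). -/

import Mathlib

open MeasureTheory Matrix
open scoped FourierTransform


open scoped MatrixOrder in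
theorem exists_factor {N : ℕ} {B : Matrix (Fin N) (Fin N) ℝ} (hB : B.PosDef) :
    ∃ R : Matrix (Fin N) (Fin N) ℝ, IsUnit R ∧ B = Rᴴ * R := by
  obtain ⟨y, hy⟩ := CStarAlgebra.nonneg_iff_eq_star_mul_self.mp hB.posSemidef.nonneg
  refine ⟨y, ?_, hy⟩
  have := hB.isUnit
  rw [Matrix.isUnit_iff_isUnit_det] at this ⊢
  rw [hy, Matrix.det_mul] at this
  exact isUnit_of_mul_isUnit_right this

open scoped ComplexOrder in
theorem posDef_map {N : ℕ} {B : Matrix (Fin N) (Fin N) ℝ} (hB : B.PosDef) :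
    (B.map (fun a => (a : ℂ))).PosDef := by
  obtain ⟨R, hR, rfl⟩ := exists_factor hB
  have h1 : (Rᴴ * R).map (fun a => (a : ℂ)) = (R.map (fun a => (a : ℂ)))ᴴ * R.map (fun a => (a : ℂ)) := by
    ext i j
    simp [Matrix.mul_apply]
  have h2 : IsUnit (R.map (fun a => (a : ℂ))) := hR.map (Complex.ofRealHom.mapMatrix)
  rw [h1]
  have := (Matrix.IsUnit.posDef_star_left_conjugate_iff h2).2 (Matrix.PosDef.one (n := Fin N) (R := ℂ))
  rwa [Matrix.mul_one, Matrix.star_eq_conjTranspose] at this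

open scoped ComplexOrder in
theorem matrix_part {N : ℕ} {B Bt : Matrix (Fin N) (Fin N) ℝ} (hB : B.PosDef) (hBt : Bt.PosDef) :
  IsUnit B.det ∧
    (∃ C P : Matrix (Fin N) (Fin N) ℝ, C.PosDef ∧ IsUnit P.det ∧
      Bt * B⁻¹ = P * C * P⁻¹) ∧
    ∀ (μ : ℂ) (v : Fin N → ℂ), v ≠ 0 →
      (Bt * B⁻¹).map (fun a => (a : ℂ)) *ᵥ v = μ • v → μ.im = 0 ∧ 0 < μ.re := by
  have hu : IsUnit B.det := (Matrix.isUnit_iff_isUnit_det _).1 hB.isUnit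
  refine ⟨hu, ?_, ?_⟩
  · obtain ⟨R, hR, hBR⟩ := exists_factor hB
    have hRd : IsUnit R.det := (Matrix.isUnit_iff_isUnit_det _).1 hR
    have hRi : IsUnit R⁻¹ := Matrix.isUnit_nonsing_inv_iff.2 hR
    have hRh : IsUnit Rᴴ.det := (Matrix.isUnit_iff_isUnit_det _).1 hR.star
    refine ⟨star R⁻¹ * Bt * R⁻¹, Rᴴ, (Matrix.IsUnit.posDef_star_left_conjugate_iff hRi).2 hBt, hRh, ?_⟩
    rw [hBR, Matrix.mul_inv_rev, Matrix.star_eq_conjTranspose, Matrix.conjTranspose_nonsing_inv]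
    simp only [← Matrix.mul_assoc]
    rw [Matrix.mul_nonsing_inv _ hRh, Matrix.one_mul]
  · intro μ v hv h
    set Bc := B.map (fun a => (a : ℂ)) with hBc
    set Btc := Bt.map (fun a => (a : ℂ)) with hBtc
    have p1 : Bc.PosDef := posDef_map hB
    have p2 : Btc.PosDef := posDef_map hBt
    have e1 : (Bt * B⁻¹).map (fun a => (a : ℂ)) = Btc * (B⁻¹).map (fun a => (a : ℂ)) :=
      Matrix.map_mul (f := Complex.ofRealHom)
    have e2 : Bc * (B⁻¹).map (fun a => (a : ℂ)) = 1 := by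
      have : (B * B⁻¹).map (fun a => (a : ℂ)) = Bc * (B⁻¹).map (fun a => (a : ℂ)) :=
        Matrix.map_mul (f := Complex.ofRealHom)
      rw [← this, Matrix.mul_nonsing_inv _ hu]
      exact Matrix.map_one _ (by simp) (by simp)
    set w := (B⁻¹).map (fun a => (a : ℂ)) *ᵥ v with hw
    have e3 : Bc *ᵥ w = v := by rw [hw, Matrix.mulVec_mulVec, e2, Matrix.one_mulVec]
    have hw0 : w ≠ 0 := by
      intro h0
      rw [h0, Matrix.mulVec_zero] at e3
      exact hv e3.symm
    rw [e1, ← Matrix.mulVec_mulVec, ← hw] at h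
    have q1 := p1.dotProduct_mulVec_pos hw0
    have q2 := p2.dotProduct_mulVec_pos hw0
    rw [e3] at q1
    rw [h, dotProduct_smul, smul_eq_mul] at q2
    rw [Complex.lt_def] at q1 q2
    obtain ⟨a1, a2⟩ := q1
    obtain ⟨b1, b2⟩ := q2
    simp only [Complex.zero_re, Complex.zero_im, Complex.mul_re, Complex.mul_im] at a1 a2 b1 b2
    rw [← a2] at b1 b2
    simp only [mul_zero, sub_zero, zero_add] at b1 b2
    constructor
    · rcases mul_eq_zero.1 b2.symm with h | h
      · exact h
      · exact absurd h a1.ne'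
    · exact pos_of_mul_pos_left b1 a1.le

theorem fourier_cont {d : ℕ} {f : EuclideanSpace ℝ (Fin d) → ℂ} (hf : Integrable f) :
    Continuous (𝓕 f) :=
  VectorFourier.fourierIntegral_continuous Real.continuous_fourierChar
    (by exact continuous_inner) hf

theorem fourier_bdd {d : ℕ} (f : EuclideanSpace ℝ (Fin d) → ℂ) (ξ) :
    ‖𝓕 f ξ‖ ≤ ∫ v, ‖f v‖ :=
  VectorFourier.norm_fourierIntegral_le_integral_norm _ _ _ _ _

theorem char_indep {d N : ℕ} (q : Fin N → EuclideanSpace ℝ (Fin d)) (hq : Function.Injective q)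
    (c : Fin N → ℂ)
    (h : ∀ ξ : EuclideanSpace ℝ (Fin d), ∑ i, c i * (Real.fourierChar (inner ℝ ξ (q i)) : ℂ) = 0) :
    c = 0 := by
  let χ : Fin N → (Multiplicative (EuclideanSpace ℝ (Fin d)) →* ℂ) := fun i =>
    { toFun := fun ξ => (Real.fourierChar (inner ℝ ξ.toAdd (q i)) : ℂ)
      map_one' := by simp
      map_mul' := fun x y => by
        simp [inner_add_left, AddChar.map_add_eq_mul] }
  have hχ : Function.Injective χ := by
    intro i j hij
    by_contra hne
    have hne' : q i - q j ≠ 0 := sub_ne_zero.2 (hq.ne hne)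
    have hn : (inner ℝ (q i - q j) (q i - q j) : ℝ) ≠ 0 := inner_self_ne_zero.2 hne'
    set w := q i - q j with hw
    have h1 := DFunLike.congr_fun hij (Multiplicative.ofAdd ((1 / (2 * (inner ℝ w w : ℝ))) • w))
    simp only [χ, MonoidHom.coe_mk, OneHom.coe_mk, toAdd_ofAdd] at h1
    have h2 : q i = q j + w := by rw [hw]; abel
    rw [h2, inner_add_right, AddChar.map_add_eq_mul, Circle.coe_mul] at h1
    have h3 : (inner ℝ ((1 / (2 * (inner ℝ w w : ℝ))) • w) w : ℝ) = 1 / 2 := by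
      rw [inner_smul_left]
      simp only [RCLike.conj_to_real]
      field_simp
    rw [h3] at h1
    have h4 : ((Real.fourierChar (1 / 2 : ℝ) : Circle) : ℂ) = -1 := by
      rw [Real.fourierChar_apply]
      have : ((2 * Real.pi * (1 / 2) : ℝ) : ℂ) * Complex.I = Real.pi * Complex.I := by
        push_cast; ring
      rw [this, Complex.exp_pi_mul_I]
    rw [h4] at h1
    have h5 := Circle.coe_ne_zero (Real.fourierChar (inner ℝ ((1 / (2 * (inner ℝ w w : ℝ))) • w) (q j)))
    apply h5
    linear_combination (-1/2) * h1
  have hli := (linearIndependent_monoidHom (Multiplicative (EuclideanSpace ℝ (Fin d))) ℂ).comp χ hχ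
  rw [Fintype.linearIndependent_iff] at hli
  funext i
  refine hli c ?_ i
  funext ξ
  simpa [χ] using h ξ.toAdd

theorem kernel_posDef {d N : ℕ} (f : EuclideanSpace ℝ (Fin d) → ℝ)
    (hc : Continuous f) (hi : Integrable f) (he : ∀ x, f (-x) = f x)
    (hFi : Integrable (𝓕 fun x => (f x : ℂ)))
    (hre : ∀ ξ : EuclideanSpace ℝ (Fin d), ((𝓕 fun x => (f x : ℂ)) ξ).im = 0)
    (hpos : ∀ ξ : EuclideanSpace ℝ (Fin d), 0 < ((𝓕 fun x => (f x : ℂ)) ξ).re)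
    (q : Fin N → EuclideanSpace ℝ (Fin d)) (hq : Function.Injective q)
    (B : Matrix (Fin N) (Fin N) ℝ) (hB : ∀ i j, B i j = f (q i - q j)) : B.PosDef := by
  have hfi : Integrable (fun x => (f x : ℂ)) := hi.ofReal
  have hinv := Continuous.fourierInv_fourier_eq (f := fun x => (f x : ℂ))
    (Complex.continuous_ofReal.comp hc) hfi hFi
  have hFc := fourier_cont hfi
  set F := 𝓕 fun x => (f x : ℂ) with hF
  let E : Fin N → EuclideanSpace ℝ (Fin d) → ℂ := fun i ξ => (Real.fourierChar (inner ℝ ξ (q i)) : ℂ)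
  have hEc : ∀ i, Continuous (E i) := fun i => by
    have := Real.continuous_fourierChar
    fun_prop
  have hEn : ∀ i ξ, ‖E i ξ‖ = 1 := fun i ξ => Circle.norm_coe _
  have hint : ∀ i j, Integrable (fun ξ => E i ξ * star (E j ξ) * F ξ) := fun i j => by
    refine hFi.bdd_mul (c := 1) ?_ ?_
    · exact ((hEc i).mul (hEc j).star).aestronglyMeasurable
    · filter_upwards with ξ
      simp [hEn]
  have hval : ∀ i j, (B i j : ℂ) = ∫ ξ, E i ξ * star (E j ξ) * F ξ := fun i j => by
    have := congrFun hinv (q i - q j)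
    rw [hB, ← this, Real.fourierInv_eq]
    refine integral_congr_ae ?_
    filter_upwards with ξ
    simp only [E, Circle.smul_def, smul_eq_mul, inner_sub_right, AddChar.map_sub_eq_div,
      Circle.coe_div]
    rw [div_eq_mul_inv, ← Circle.coe_inv, Circle.coe_inv_eq_conj]
    rfl
  refine Matrix.PosDef.of_dotProduct_mulVec_pos ?_ ?_
  · ext i j
    simp only [Matrix.conjTranspose_apply, star_trivial, hB]
    rw [← he, neg_sub]
  intro c hc0
  let G : EuclideanSpace ℝ (Fin d) → ℂ := fun ξ => ∑ i, (c i : ℂ) * E i ξ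
  have hGc : Continuous G := by
    refine continuous_finsetSum _ fun i _ => continuous_const.mul (hEc i)
  have hpt : ∀ ξ, ((Complex.normSq (G ξ) * (F ξ).re : ℝ) : ℂ) =
      ∑ i, ∑ j, (c i : ℂ) * c j * (E i ξ * star (E j ξ) * F ξ) := fun ξ => by
    have h1 : ((F ξ).re : ℂ) = F ξ := by
      apply Complex.ext <;> simp [hre ξ]
    push_cast
    rw [h1, Complex.normSq_eq_conj_mul_self, mul_comm (starRingEnd ℂ _)]
    simp only [G, map_sum]
    rw [Finset.sum_mul_sum]
    simp only [Finset.sum_mul]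
    refine Finset.sum_congr rfl fun i _ => Finset.sum_congr rfl fun j _ => ?_
    simp only [map_mul, Complex.conj_ofReal, Complex.star_def]
    ring
  have hIC : Integrable (fun ξ => ((Complex.normSq (G ξ) * (F ξ).re : ℝ) : ℂ)) := by
    simp_rw [hpt]
    exact integrable_finsetSum _ fun i _ => integrable_finsetSum _ fun j _ =>
      (hint i j).const_mul _
  have hIR : Integrable (fun ξ => Complex.normSq (G ξ) * (F ξ).re) := by
    simpa using hIC.re
  have hquad : star c ⬝ᵥ (B *ᵥ c) = ∫ ξ, Complex.normSq (G ξ) * (F ξ).re := by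
    apply Complex.ofReal_injective
    rw [← integral_complex_ofReal]
    simp_rw [hpt]
    rw [integral_finsetSum _ fun i _ => integrable_finsetSum _ fun j _ => (hint i j).const_mul _]
    simp only [dotProduct, Matrix.mulVec, Finset.mul_sum, Complex.ofReal_sum]
    refine Finset.sum_congr rfl fun i _ => ?_
    rw [integral_finsetSum _ fun j _ => (hint i j).const_mul _]
    refine Finset.sum_congr rfl fun j _ => ?_
    rw [integral_const_mul, ← hval]
    push_cast
    simp
    ring
  rw [hquad]
  obtain ⟨ξ, hξ⟩ : ∃ ξ, G ξ ≠ 0 := by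
    by_contra! hcon
    apply hc0
    have := char_indep q hq (fun i => (c i : ℂ)) hcon
    funext i
    simpa using congrFun this i
  refine integral_pos_of_integrable_nonneg_nonzero (x := ξ) ?_ hIR ?_ ?_
  · exact (Complex.continuous_normSq.comp hGc).mul (Complex.continuous_re.comp hFc)
  · exact fun ξ => mul_nonneg (Complex.normSq_nonneg _) (hpos ξ).le
  · exact mul_ne_zero (by simpa using hξ) (hpos ξ).ne'

open scoped Convolution in
theorem conv_part {d : ℕ} (ψ g : EuclideanSpace ℝ (Fin d) → ℝ)
    (hψ_int : Integrable ψ) (hψ_even : ∀ x, ψ (-x) = ψ x)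
    (hg_cont : Continuous g) (hg_int : Integrable g) (hg_even : ∀ x, g (-x) = g x)
    (hgFT_int : Integrable (𝓕 fun x => (g x : ℂ)))
    (ψt : EuclideanSpace ℝ (Fin d) → ℝ)
    (hψt : ∀ x, ψt x = ∫ y, g (x - y) * ψ y) :
    Continuous ψt ∧ Integrable ψt ∧ (∀ x, ψt (-x) = ψt x) ∧
    (𝓕 fun x => (ψt x : ℂ)) = fun ξ => (𝓕 fun x => (ψ x : ℂ)) ξ * (𝓕 fun x => (g x : ℂ)) ξ := by
  have hgC : Integrable (fun x => (g x : ℂ)) := hg_int.ofReal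
  have hψC : Integrable (fun x => (ψ x : ℂ)) := hψ_int.ofReal
  have hgb : BddAbove (Set.range fun x => ‖g x‖) := by
    have hinv := Continuous.fourierInv_fourier_eq (f := fun x => (g x : ℂ))
      (Complex.continuous_ofReal.comp hg_cont) hgC hgFT_int
    refine ⟨∫ v, ‖(𝓕 fun x => (g x : ℂ)) v‖, ?_⟩
    rintro _ ⟨x, rfl⟩
    have h1 := congrFun hinv x
    have h2 : ‖g x‖ = ‖(g x : ℂ)‖ := by simp
    simp only []
    rw [h2, ← h1, Real.fourierInv_eq_fourier_neg]
    exact fourier_bdd _ _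
  have hR : ψt = ψ ⋆[ContinuousLinearMap.mul ℝ ℝ] g := by
    funext x
    rw [hψt]
    simp only [convolution, ContinuousLinearMap.mul_apply', mul_comm]
  have hC : (fun x => (ψt x : ℂ)) =
      (fun x => (ψ x : ℂ)) ⋆[ContinuousLinearMap.mul ℂ ℂ] (fun x => (g x : ℂ)) := by
    funext x
    rw [hψt, ← integral_complex_ofReal]
    simp only [convolution, ContinuousLinearMap.mul_apply', mul_comm, Complex.ofReal_mul]
  refine ⟨?_, ?_, ?_, ?_⟩
  · rw [hR]
    exact hgb.continuous_convolution_right_of_integrable _ hψ_int hg_cont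
  · rw [hR]
    exact hψ_int.integrable_convolution _ hg_int
  · intro x
    rw [hψt, hψt, ← integral_neg_eq_self]
    refine integral_congr_ae ?_
    filter_upwards with y
    rw [hψ_even, ← hg_even (x - y)]
    congr 2
    abel
  · rw [hC]
    funext ξ
    exact Real.fourier_mul_convolution_eq hψC hgC ξ

/-- Theorem 2.1 of the paper: if the interpolation kernel `ψ` and the convolution kernel
`g` each have strictly positive Fourier transform, then the interpolation matrix `B` and
the blurred interpolation matrix `B̃` (built from `ψ̃ = g ⋆ ψ`) are symmetric positive
definite, `B` is invertible, and `S = B̃ B⁻¹` has real, strictly positive eigenvalues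
(being similar to a symmetric positive definite matrix). -/
theorem blurring_operator_posDef
    (d : ℕ) (hd : 1 ≤ d) (ψ g : EuclideanSpace ℝ (Fin d) → ℝ)
    (hψ_cont : Continuous ψ) (hψ_int : Integrable ψ) (hψ_even : ∀ x, ψ (-x) = ψ x)
    (hg_cont : Continuous g) (hg_int : Integrable g) (hg_even : ∀ x, g (-x) = g x)
    (hψFT_int : Integrable (𝓕 fun x => (ψ x : ℂ)))
    (hψFT_real : ∀ ξ : EuclideanSpace ℝ (Fin d), ((𝓕 fun x => (ψ x : ℂ)) ξ).im = 0)
    (hψFT_pos : ∀ ξ : EuclideanSpace ℝ (Fin d), 0 < ((𝓕 fun x => (ψ x : ℂ)) ξ).re)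
    (hgFT_int : Integrable (𝓕 fun x => (g x : ℂ)))
    (hgFT_real : ∀ ξ : EuclideanSpace ℝ (Fin d), ((𝓕 fun x => (g x : ℂ)) ξ).im = 0)
    (hgFT_pos : ∀ ξ : EuclideanSpace ℝ (Fin d), 0 < ((𝓕 fun x => (g x : ℂ)) ξ).re)
    (ψt : EuclideanSpace ℝ (Fin d) → ℝ)
    (hψt : ∀ x, ψt x = ∫ y, g (x - y) * ψ y)
    (N : ℕ) (q : Fin N → EuclideanSpace ℝ (Fin d)) (hq : Function.Injective q)
    (B Bt : Matrix (Fin N) (Fin N) ℝ)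
    (hB : ∀ i j, B i j = ψ (q i - q j))
    (hBt : ∀ i j, Bt i j = ψt (q i - q j)) :
    B.PosDef ∧ Bt.PosDef ∧ IsUnit B.det ∧
    (∃ C P : Matrix (Fin N) (Fin N) ℝ, C.PosDef ∧ IsUnit P.det ∧
      Bt * B⁻¹ = P * C * P⁻¹) ∧
    ∀ (μ : ℂ) (v : Fin N → ℂ), v ≠ 0 →
      (Bt * B⁻¹).map (fun a => (a : ℂ)) *ᵥ v = μ • v → μ.im = 0 ∧ 0 < μ.re := by
  have hBp : B.PosDef := kernel_posDef ψ hψ_cont hψ_int hψ_even hψFT_int hψFT_real hψFT_pos q hq B hB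
  obtain ⟨h1, h2, h3, h4⟩ := conv_part ψ g hψ_int hψ_even hg_cont hg_int hg_even hgFT_int ψt hψt
  have hBtp : Bt.PosDef := by
    refine kernel_posDef ψt h1 h2 h3 ?_ ?_ ?_ q hq Bt hBt
    · rw [h4]
      refine hgFT_int.bdd_mul (c := ∫ v, ‖(ψ v : ℂ)‖) ?_ ?_
      · exact (fourier_cont hψ_int.ofReal).aestronglyMeasurable
      · filter_upwards with ξ
        exact fourier_bdd _ _
    · intro ξ
      rw [h4]
      simp only [Complex.mul_im, hψFT_real ξ, hgFT_real ξ, mul_zero, zero_mul, add_zero]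
    · intro ξ
      rw [h4]
      simp only [Complex.mul_re, hψFT_real ξ, hgFT_real ξ, mul_zero, sub_zero]
      exact mul_pos (hψFT_pos ξ) (hgFT_pos ξ)
  exact ⟨hBp, hBtp, matrix_part hBp hBtp⟩
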